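/- The element u' satisfies d_0^{⊗p}(u') = v, d_1^{⊗p}(u') = 0, d_2^{⊗p}(u') = -v, d_3^{⊗p}(u') = 0, and d_4^{⊗p}(u') = 0. -/

import Mathlib

/-!
Write `T(x, y, z) = Σ_a (-1)^a Σ_j σʲ (x ⊗ y^{⊗(p-2-a)} ⊗ z ⊗ y^{⊗a})` (`cycAlt` below), so that
`v = T(b₁, b₂, b₃)` and `u' = T(c₂, c₃, c₄) - T(c₁, c₃, c₄)`. Since `g^{⊗p}` commutes with `σ`, it
sends `T(x, y, z)` to `T(g x, g y, g z)` (`tpow_cycAlt`), and the five claims follow from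
vanishing of `T` on degenerate arguments.

* `T(0, y, z) = T(x, y, 0) = 0`, by multilinearity.
* `T(x, z, z) = 0`: the cyclic sum does not depend on `a`, and `Σ_{a=0}^{p-2} (-1)^a = 0` because
  `p` is odd.
* `T(y, y, z) = 0`: the tensor for `a` is the `σ`-translate of the one for `a + 1`, so again the
  cyclic sum does not depend on `a`.
-/

open scoped TensorProduct
open PiTensorProduct

noncomputable section

/-- The `p`-th tensor power of `R^n`. -/
abbrev TP (R : Type) [CommRing R] (p n : ℕ) : Type :=
  ⨂[R] (_ : Fin p), (Fin n → R)

/-- The cyclic permutation `σ` of the tensor factors,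
`σ (w₁ ⊗ ⋯ ⊗ w_p) = w_p ⊗ w₁ ⊗ ⋯ ⊗ w_{p-1}`; it generates the action of `ℤ/pℤ`. -/
def cyc (R : Type) [CommRing R] (p n : ℕ) : TP R p n ≃ₗ[R] TP R p n :=
  PiTensorProduct.reindex R (fun _ : Fin p => (Fin n → R)) (finRotate p)

/-- The matrices `G₁ = e`, `G₂ = h`, `G₃ = f`. -/
def stdG (R : Type) [CommRing R] : Fin 3 → Matrix (Fin 2) (Fin 2) R :=
  ![!![0, 1; 0, 0], !![1, 0; 0, -1], !![0, 0; 1, 0]]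

/-- `τ_λ` on the standard basis vectors: `τ_λ(b₁) = (-2,0,0)`, `τ_λ(b₂) = (λ,1-λ,λ)`,
`τ_λ(b₃) = (0,0,2λ)`. -/
def tau (R : Type) [CommRing R] (l : R) : Fin 3 → (Fin 3 → R) :=
  ![![-2, 0, 0], ![l, 1 - l, l], ![0, 0, 2 * l]]

/-- `t_λ = Σ_w tr(G_{w 1} ⋯ G_{w p}) • τ_λ(b_{w 1}) ⊗ ⋯ ⊗ τ_λ(b_{w p})`. -/
def tEl (R : Type) [CommRing R] (p : ℕ) (l : R) : TP R p 3 :=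
  ∑ w : Fin p → Fin 3,
    (List.ofFn fun i => stdG R (w i)).prod.trace • tprod R fun i => tau R l (w i)

/-- The matrices of the face maps `d₀, d₁, d₂, d₃ : k³ → k²`. -/
def d32 (R : Type) [CommRing R] : Fin 4 → Matrix (Fin 2) (Fin 3) R :=
  ![!![0, 1, 0; 0, 0, 1], !![1, 1, 0; 0, 0, 1], !![1, 0, 0; 0, 1, 1], !![1, 0, 0; 0, 1, 0]]

/-- The matrices of the face maps `d₀, d₁, d₂, d₃, d₄ : k⁴ → k³`. -/
def d43 (R : Type) [CommRing R] : Fin 5 → Matrix (Fin 3) (Fin 4) R :=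
  ![!![0, 1, 0, 0; 0, 0, 1, 0; 0, 0, 0, 1], !![1, 1, 0, 0; 0, 0, 1, 0; 0, 0, 0, 1],
    !![1, 0, 0, 0; 0, 1, 1, 0; 0, 0, 0, 1], !![1, 0, 0, 0; 0, 1, 0, 0; 0, 0, 1, 1],
    !![1, 0, 0, 0; 0, 1, 0, 0; 0, 0, 1, 0]]

/-- `g^{⊗p}`, the `p`-th tensor power of the linear map with matrix `A`. -/
def tpow (R : Type) [CommRing R] (p : ℕ) {m n : ℕ} (A : Matrix (Fin m) (Fin n) R) :
    TP R p n →ₗ[R] TP R p m :=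
  PiTensorProduct.map fun _ => A.mulVecLin


/-- The word (function `Fin p → Fin 3`) describing the pure tensor
`b₁ ⊗ b₂^{⊗(p-2-a)} ⊗ b₃ ⊗ b₂^{⊗a}` (indices `0,1,2` stand for `b₁,b₂,b₃`). -/
def vWord (p a : ℕ) : Fin p → Fin 3 := fun i =>
  if (i : ℕ) = 0 then 0 else if (i : ℕ) = p - 1 - a then 2 else 1

/-- `v = Σ_{a=0}^{p-2} (-1)^a Σ_{j=0}^{p-1} σʲ (b₁ ⊗ b₂^{⊗(p-2-a)} ⊗ b₃ ⊗ b₂^{⊗a})`. -/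
def vEl (R : Type) [CommRing R] (p : ℕ) : TP R p 3 :=
  ∑ a ∈ Finset.range (p - 1), (-1 : R) ^ a •
    ∑ j ∈ Finset.range p,
      (⇑(cyc R p 3))^[j] (tprod R fun i => (Pi.single (vWord p a i) 1 : Fin 3 → R))

/-- The word (function `Fin p → Fin 4`) describing the pure tensor
`c_{j+1} ⊗ c₃^{⊗(p-2-a)} ⊗ c₄ ⊗ c₃^{⊗a}` (indices `0,1,2,3` stand for `c₁,c₂,c₃,c₄`). -/
def uWord (p a : ℕ) (j : Fin 4) : Fin p → Fin 4 := fun i =>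
  if (i : ℕ) = 0 then j else if (i : ℕ) = p - 1 - a then 3 else 2

/-- `u' = Σ_a (-1)^a Σ_j σʲ (c₂ ⊗ c₃^{⊗(p-2-a)} ⊗ c₄ ⊗ c₃^{⊗a})
        - Σ_a (-1)^a Σ_j σʲ (c₁ ⊗ c₃^{⊗(p-2-a)} ⊗ c₄ ⊗ c₃^{⊗a})`. -/
def uEl (R : Type) [CommRing R] (p : ℕ) : TP R p 4 :=
  (∑ a ∈ Finset.range (p - 1), (-1 : R) ^ a •
      ∑ j ∈ Finset.range p,
        (⇑(cyc R p 4))^[j] (tprod R fun i => (Pi.single (uWord p a 1 i) 1 : Fin 4 → R))) -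
  ∑ a ∈ Finset.range (p - 1), (-1 : R) ^ a •
      ∑ j ∈ Finset.range p,
        (⇑(cyc R p 4))^[j] (tprod R fun i => (Pi.single (uWord p a 0 i) 1 : Fin 4 → R))

/-- The factors of `x ⊗ y^{⊗(p-2-a)} ⊗ z ⊗ y^{⊗a}`, indexed from `0`. -/
def pat {M : Type} (p : ℕ) (x y z : M) (a : ℕ) : Fin p → M := fun i =>
  if (i : ℕ) = 0 then x else if (i : ℕ) = p - 1 - a then z else y

/-- The sum `Σ_{j<p} σʲ w` of a tensor over its cyclic rotations. -/
def cycSum (R : Type) [CommRing R] (p n : ℕ) (w : TP R p n) : TP R p n :=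
  ∑ j ∈ Finset.range p, (⇑(cyc R p n))^[j] w

/-- `T(x, y, z) = Σ_{a=0}^{p-2} (-1)^a Σ_j σʲ (x ⊗ y^{⊗(p-2-a)} ⊗ z ⊗ y^{⊗a})`. -/
def cycAlt (R : Type) [CommRing R] (p n : ℕ) (x y z : Fin n → R) : TP R p n :=
  ∑ a ∈ Finset.range (p - 1), (-1 : R) ^ a • cycSum R p n (tprod R (pat p x y z a))

section

variable {R : Type} [CommRing R] {p m n : ℕ}

lemma cyc_tprod (f : Fin p → Fin n → R) :
    cyc R p n (tprod R f) = tprod R fun i => f ((finRotate p).symm i) :=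
  reindex_tprod (s := fun _ : Fin p => (Fin n → R)) _ _

lemma cyc_iterate_tprod (f : Fin p → Fin n → R) (j : ℕ) :
    (⇑(cyc R p n))^[j] (tprod R f) = tprod R fun i => f ((⇑(finRotate p).symm)^[j] i) := by
  induction j with
  | zero => simp
  | succ j ih =>
    rw [Function.iterate_succ_apply', ih, cyc_tprod]
    rfl

lemma finRotate_iterate (i : Fin (n + 1)) (j : ℕ) :
    (⇑(finRotate (n + 1)))^[j] i = i + j • (1 : Fin (n + 1)) := by
  induction j with
  | zero => simp
  | succ j ih =>
    rw [Function.iterate_succ_apply', ih, finRotate_apply, succ_nsmul, add_assoc]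

lemma finRotate_symm_iterate_self (i : Fin p) : (⇑(finRotate p).symm)^[p] i = i := by
  cases p with
  | zero => exact i.elim0
  | succ q =>
    have h := (Function.LeftInverse.iterate (finRotate (q + 1)).symm_apply_apply (q + 1)) i
    have h1 : (q + 1) • (1 : Fin (q + 1)) = 0 := by
      simpa using card_nsmul_eq_zero (x := (1 : Fin (q + 1)))
    rwa [finRotate_iterate, h1, add_zero] at h

/-- Cyclic sums are invariant under `σ`, because `σᵖ = 1`. -/
lemma cycSum_cyc (f : Fin p → Fin n → R) :
    cycSum R p n (cyc R p n (tprod R f)) = cycSum R p n (tprod R f) := by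
  unfold cycSum
  have h := Finset.sum_range_succ (fun j => (⇑(cyc R p n))^[j] (tprod R f)) p
  rw [Finset.sum_range_succ', cyc_iterate_tprod f p] at h
  simp only [finRotate_symm_iterate_self, Function.iterate_zero, id] at h
  simpa only [← Function.iterate_succ_apply] using add_right_cancel h

lemma tpow_cyc (A : Matrix (Fin m) (Fin n) R) (w : TP R p n) :
    tpow R p A (cyc R p n w) = cyc R p m (tpow R p A w) :=
  LinearMap.congr_fun
    (map_comp_reindex_eq (fun _ : Fin p => A.mulVecLin) (finRotate p)) w

lemma tpow_cycSum (A : Matrix (Fin m) (Fin n) R) (w : TP R p n) :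
    tpow R p A (cycSum R p n w) = cycSum R p m (tpow R p A w) := by
  unfold cycSum
  rw [map_sum]
  refine Finset.sum_congr rfl fun j _ => ?_
  exact Function.Semiconj.iterate_right (tpow_cyc A) j w

lemma tpow_tprod_pat (A : Matrix (Fin m) (Fin n) R) (x y z : Fin n → R) (a : ℕ) :
    tpow R p A (tprod R (pat p x y z a)) =
      tprod R (pat p (A.mulVec x) (A.mulVec y) (A.mulVec z) a) := by
  unfold tpow
  rw [map_tprod]
  congr 1
  funext i
  simp only [pat, Matrix.mulVecLin_apply]
  split_ifs <;> rfl

lemma tpow_cycAlt (A : Matrix (Fin m) (Fin n) R) (x y z : Fin n → R) :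
    tpow R p A (cycAlt R p n x y z) =
      cycAlt R p m (A.mulVec x) (A.mulVec y) (A.mulVec z) := by
  simp only [cycAlt, map_sum, map_smul, tpow_cycSum, tpow_tprod_pat]

lemma cycSum_zero : cycSum R p n 0 = 0 := by
  unfold cycSum
  refine Finset.sum_eq_zero fun j _ => ?_
  exact Function.iterate_fixed (map_zero _) j

lemma cycAlt_zero_left (y z : Fin n → R) : cycAlt R p n 0 y z = 0 := by
  unfold cycAlt
  refine Finset.sum_eq_zero fun a ha => ?_
  have ha := Finset.mem_range.1 ha
  rw [MultilinearMap.map_coord_zero (tprod R) (⟨0, by omega⟩ : Fin p) (by simp [pat]), cycSum_zero, smul_zero]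

lemma cycAlt_zero_right (x y : Fin n → R) : cycAlt R p n x y 0 = 0 := by
  unfold cycAlt
  refine Finset.sum_eq_zero fun a ha => ?_
  have ha := Finset.mem_range.1 ha
  have h : p - 1 - a ≠ 0 := by omega
  rw [MultilinearMap.map_coord_zero (tprod R) (⟨p - 1 - a, by omega⟩ : Fin p) (by simp [pat, h]),
    cycSum_zero, smul_zero]

/-- If the cyclic sums do not depend on `a`, the alternating sum, having the even number `p - 1` of
terms, vanishes. -/
lemma cycAlt_eq_zero_of_const (hp : Odd p) {x y z : Fin n → R}
    (h : ∀ a, a < p - 1 → cycSum R p n (tprod R (pat p x y z a)) =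
      cycSum R p n (tprod R (pat p x y z 0))) : cycAlt R p n x y z = 0 := by
  unfold cycAlt
  rw [Finset.sum_congr rfl fun a ha => by rw [h a (Finset.mem_range.1 ha)], ← Finset.sum_smul,
    neg_one_geom_sum, if_pos (Nat.Odd.sub_odd hp odd_one), zero_smul]

lemma cycAlt_right_right (hp : Odd p) (x z : Fin n → R) : cycAlt R p n x z z = 0 :=
  cycAlt_eq_zero_of_const hp fun a _ => by
    have h (b : ℕ) : pat p x z z b = pat p x z z 0 := by
      funext i
      simp only [pat, ite_self]
    rw [h]

/-- Rotating `y^{⊗(p-2-a)} ⊗ z ⊗ y^{⊗(a+1)}` by one step gives `y^{⊗(p-1-a)} ⊗ z ⊗ y^{⊗a}`. -/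
lemma cyc_pat (y z : Fin n → R) {a : ℕ} (ha : a + 1 < p - 1) :
    cyc R p n (tprod R (pat p y y z (a + 1))) = tprod R (pat p y y z a) := by
  rw [cyc_tprod]
  congr 1
  funext i
  obtain ⟨j, rfl⟩ := (finRotate p).surjective i
  rw [Equiv.symm_apply_apply]
  obtain ⟨q, rfl⟩ : ∃ q, p = q + 1 := ⟨p - 1, by omega⟩
  have hj : ((finRotate (q + 1) j : Fin (q + 1)) : ℕ) = if (j : ℕ) = q then 0 else (j : ℕ) + 1 := by
    rw [coe_finRotate]
    simp [Fin.ext_iff]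
  have := j.isLt
  simp only [pat, hj]
  by_cases hq : (j : ℕ) = q
  · simp only [if_pos hq]
    split_ifs <;> first | rfl | omega
  · simp only [if_neg hq]
    split_ifs <;> first | rfl | (exfalso; omega)

lemma cycAlt_left_left (hp : Odd p) (y z : Fin n → R) : cycAlt R p n y y z = 0 := by
  refine cycAlt_eq_zero_of_const hp fun a => ?_
  induction a with
  | zero => exact fun _ => rfl
  | succ a ih => exact fun ha => by rw [← ih (by omega), ← cyc_pat y z ha, cycSum_cyc]

end

lemma vEl_eq (R : Type) [CommRing R] (p : ℕ) :
    vEl R p = cycAlt R p 3 (Pi.single 0 1) (Pi.single 1 1) (Pi.single 2 1) := by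
  have h (a : ℕ) : (fun i => (Pi.single (vWord p a i) 1 : Fin 3 → R)) =
      pat p (Pi.single 0 1) (Pi.single 1 1) (Pi.single 2 1) a := by
    funext i
    simp only [vWord, pat]
    split_ifs <;> rfl
  simp only [vEl, cycAlt, cycSum, h]

lemma uEl_eq (R : Type) [CommRing R] (p : ℕ) :
    uEl R p = cycAlt R p 4 (Pi.single 1 1) (Pi.single 2 1) (Pi.single 3 1) -
      cycAlt R p 4 (Pi.single 0 1) (Pi.single 2 1) (Pi.single 3 1) := by
  have h (a : ℕ) (j : Fin 4) : (fun i => (Pi.single (uWord p a j i) 1 : Fin 4 → R)) =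
      pat p (Pi.single j 1) (Pi.single 2 1) (Pi.single 3 1) a := by
    funext i
    simp only [uWord, pat]
    split_ifs <;> rfl
  simp only [uEl, cycAlt, cycSum, h]

theorem statement10 (k : Type) [Field k] [Fintype k] (p : ℕ) [Fact p.Prime] [CharP k p]
    (hp3 : 3 ≤ p) :
    tpow k p (d43 k 0) (uEl k p) = vEl k p ∧
    tpow k p (d43 k 1) (uEl k p) = 0 ∧
    tpow k p (d43 k 2) (uEl k p) = - vEl k p ∧
    tpow k p (d43 k 3) (uEl k p) = 0 ∧
    tpow k p (d43 k 4) (uEl k p) = 0 := by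
  have hp : Odd p := (Fact.out : p.Prime).odd_of_ne_two (by omega)
  -- The columns of the five face maps.
  have h0 : (d43 k 0).col = ![0, Pi.single 0 1, Pi.single 1 1, Pi.single 2 1] := by
    ext i j; fin_cases i <;> fin_cases j <;> simp [d43, Matrix.col]
  have h1 : (d43 k 1).col =
      ![Pi.single 0 1, Pi.single 0 1, Pi.single 1 1, Pi.single 2 1] := by
    ext i j; fin_cases i <;> fin_cases j <;> simp [d43, Matrix.col]
  have h2 : (d43 k 2).col =
      ![Pi.single 0 1, Pi.single 1 1, Pi.single 1 1, Pi.single 2 1] := by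
    ext i j; fin_cases i <;> fin_cases j <;> simp [d43, Matrix.col]
  have h3 : (d43 k 3).col =
      ![Pi.single 0 1, Pi.single 1 1, Pi.single 2 1, Pi.single 2 1] := by
    ext i j; fin_cases i <;> fin_cases j <;> simp [d43, Matrix.col]
  have h4 : (d43 k 4).col = ![Pi.single 0 1, Pi.single 1 1, Pi.single 2 1, 0] := by
    ext i j; fin_cases i <;> fin_cases j <;> simp [d43, Matrix.col]
  simp only [uEl_eq, vEl_eq, map_sub, tpow_cycAlt, Matrix.mulVec_single_one, h0, h1, h2, h3, h4]
  refine ⟨?_, ?_, ?_, ?_, ?_⟩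
  · simp [cycAlt_zero_left]
  · simp
  · simp [cycAlt_left_left hp]
  · simp [cycAlt_right_right hp]
  · simp [cycAlt_zero_right]
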